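/- arXiv:2410.21513 — 2 statements merged into one kernel-verified Lean document; each statement's English description precedes it below -/
import Mathlib

section
/- Let A = (a_{ij})_{i,j∈[n]} be a real symmetric n×n matrix with largest eigenvalue λ_n, let B = (a_{ij})_{i,j∈[n−1]} be its top-left (n−1)×(n−1) principal submatrix, let 𝐚 = (a_{n1},…,a_{n,n−1}) ∈ ℝ^{n−1}, and let 𝐱 ∈ ℝ^{n−1} be a unit eigenvector of B corresponding to an eigenvalue μ of B. Then for every ε ∈ [0,1], λ_n − μ ≥ 2√(ε(1−ε)) |𝐚ᵀ𝐱| − ε μ + ε a_{nn}. -/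
/-- The largest eigenvalue of a real symmetric matrix, as the supremum of the Rayleigh
quotient over the unit sphere. -/
noncomputable def rayleighSup {n : ℕ} (A : Matrix (Fin n) (Fin n) ℝ) : ℝ :=
  ⨆ v : {v : Fin n → ℝ // ∑ i, v i ^ 2 = 1}, ∑ i, ∑ j, v.1 i * A i j * v.1 j

theorem rayleigh_le_aux {n : ℕ} (A : Matrix (Fin n) (Fin n) ℝ) (v : Fin n → ℝ)
    (hv : ∑ i, v i ^ 2 = 1) : ∑ i, ∑ j, v i * A i j * v j ≤ rayleighSup A := by
  have hb : BddAbove (Set.range (fun v : {v : Fin n → ℝ // ∑ i, v i ^ 2 = 1} =>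
      ∑ i, ∑ j, v.1 i * A i j * v.1 j)) := by
    refine ⟨∑ i, ∑ j, |A i j|, ?_⟩
    rintro _ ⟨⟨w, hw⟩, rfl⟩
    have h1 : ∀ i, |w i| ≤ 1 := by
      intro i
      have h := Finset.single_le_sum (f := fun i => w i ^ 2) (fun i _ => sq_nonneg (w i))
        (Finset.mem_univ i)
      simp only [hw] at h
      exact (sq_le_one_iff_abs_le_one _).1 h
    refine Finset.sum_le_sum fun i _ => Finset.sum_le_sum fun j _ => ?_
    refine (le_abs_self _).trans ?_
    simp only [abs_mul]
    calc |w i| * |A i j| * |w j| ≤ 1 * |A i j| * 1 := by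
          gcongr
          · exact h1 i
          · exact h1 j
      _ = |A i j| := by ring
  exact le_ciSup hb ⟨v, hv⟩

/-- **Eigenvalue gap estimate.**  Let `A` be a real symmetric `(n+1) × (n+1)` matrix with largest
eigenvalue `λ`, let `B` be its top-left `n × n` principal submatrix, `𝐚` the off-diagonal part
of the last row, and `x` a unit eigenvector of `B` with eigenvalue `μ`.  Then for every
`ε ∈ [0,1]`, `λ − μ ≥ 2 √(ε(1−ε)) |𝐚ᵀx| − ε μ + ε a_{nn}`. -/
theorem eigenvalue_gap_estimate {n : ℕ}
    (A : Matrix (Fin (n + 1)) (Fin (n + 1)) ℝ) (hA : A.IsSymm)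
    (x : Fin n → ℝ) (hx : ∑ i, x i ^ 2 = 1) (mu : ℝ)
    (hxeig : ∀ i : Fin n, ∑ j : Fin n, A i.castSucc j.castSucc * x j = mu * x i)
    (ε : ℝ) (hε : ε ∈ Set.Icc (0 : ℝ) 1) :
    2 * Real.sqrt (ε * (1 - ε)) * |∑ i : Fin n, A (Fin.last n) i.castSucc * x i|
        - ε * mu + ε * A (Fin.last n) (Fin.last n)
      ≤ rayleighSup A - mu := by
  obtain ⟨h0, h1⟩ := hε
  set t := ∑ i : Fin n, A (Fin.last n) i.castSucc * x i with ht
  obtain ⟨s, hs, hst⟩ : ∃ s : ℝ, s ^ 2 = 1 ∧ s * t = |t| := by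
    rcases abs_cases t with h | h
    · exact ⟨1, by norm_num, by linarith [h.1]⟩
    · exact ⟨-1, by norm_num, by linarith [h.1]⟩
  have hp : √(1 - ε) ^ 2 = 1 - ε := Real.sq_sqrt (by linarith)
  have hq : √ε ^ 2 = ε := Real.sq_sqrt h0
  rw [Real.sqrt_mul h0]
  set p := √(1 - ε)
  set q := √ε
  have key := rayleigh_le_aux A (Fin.snoc (α := fun _ => ℝ) (fun i => p * x i) (s * q)) (by
    rw [Fin.sum_univ_castSucc]
    simp only [Fin.snoc_castSucc, Fin.snoc_last, mul_pow]
    rw [← Finset.mul_sum, hx, hp, hq, hs]; ring)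
  have e1 : ∀ i : Fin n, ∑ j : Fin n, p * x i * A i.castSucc j.castSucc * (p * x j)
      = p ^ 2 * mu * x i ^ 2 := by
    intro i
    have : ∑ j : Fin n, p * x i * A i.castSucc j.castSucc * (p * x j)
        = p ^ 2 * x i * ∑ j : Fin n, A i.castSucc j.castSucc * x j := by
      rw [Finset.mul_sum]; exact Finset.sum_congr rfl fun j _ => by ring
    rw [this, hxeig]; ring
  have e2 : ∑ i : Fin n, p * x i * A i.castSucc (Fin.last n) * (s * q) = p * q * (s * t) := by
    rw [ht, Finset.mul_sum, Finset.mul_sum]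
    exact Finset.sum_congr rfl fun j _ => by rw [hA.apply]; ring
  have e3 : ∑ i : Fin n, s * q * A (Fin.last n) i.castSucc * (p * x i) = p * q * (s * t) := by
    rw [ht, Finset.mul_sum, Finset.mul_sum]
    exact Finset.sum_congr rfl fun j _ => by ring
  have e4 : s * q * A (Fin.last n) (Fin.last n) * (s * q)
      = ε * A (Fin.last n) (Fin.last n) := by
    linear_combination A (Fin.last n) (Fin.last n) * (q ^ 2 * hs + hq)
  simp only [Fin.sum_univ_castSucc, Fin.snoc_castSucc, Fin.snoc_last,
    Finset.sum_add_distrib] at key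
  simp only [e1, e2, e3, e4, ← Finset.mul_sum, hx, hst, hp] at key
  linarith
end

section
/- Let 𝒫 be a probability measure on ℝ^d with support S and Lebesgue density f. Suppose: (1) f is differentiable on the interior of S, and, setting ∇f ≡ 0 outside int(S), the function ‖∇f‖₂ is in L¹(ℝ^d); and (2) there exists a finite constant C(f), depending only on f, such that 𝒫(S_r) ≤ C(f) r for all r ≥ 0, where S_r = {x ∈ ℝ^d : inf_{y∈S^c} ‖x − y‖₂ ≤ r} (with S_r = ∅ if S = ℝ^d). Then for X ~ 𝒫 and W a standard d-dimensional Gaussian vector independent of X, and for every p, s ≥ 0, E[ ‖W‖₂^p (1 − f(X + sW)/f(X))₊ ] ≤ C'(f,p) s, where C'(f,p) < ∞ depends only on f and p. -/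
open MeasureTheory ProbabilityTheory
open scoped Classical

/-- The coordinate gradient vector `(∂_1 f(x), …, ∂_d f(x))` of `f : ℝ^d → ℝ`. -/
noncomputable def gradVec {d : ℕ} (f : (Fin d → ℝ) → ℝ) (x : Fin d → ℝ) : Fin d → ℝ :=
  fun i => fderiv ℝ f x (Pi.single i 1)


/-- Euclidean norm on `Fin d → ℝ`. -/
noncomputable def eN {d : ℕ} (v : Fin d → ℝ) : ℝ := Real.sqrt (∑ i, v i ^ 2)

lemma eN_nonneg {d : ℕ} (v : Fin d → ℝ) : 0 ≤ eN v := Real.sqrt_nonneg _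

lemma eN_measurable {d : ℕ} : Measurable (eN : (Fin d → ℝ) → ℝ) := by
  unfold eN; fun_prop

lemma eN_smul {d : ℕ} (t : ℝ) (ht : 0 ≤ t) (v : Fin d → ℝ) : eN (t • v) = t * eN v := by
  unfold eN
  simp only [Pi.smul_apply, smul_eq_mul, mul_pow, ← Finset.mul_sum]
  rw [Real.sqrt_mul (by positivity), Real.sqrt_sq ht]

/-- distance function to the set -/
noncomputable def eD {d : ℕ} (A : Set (Fin d → ℝ)) (x : Fin d → ℝ) : ℝ :=
  sInf ((fun y => Real.sqrt (∑ i, (x i - y i) ^ 2)) '' A)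

lemma eD_eq {d : ℕ} (A : Set (Fin d → ℝ)) (x : Fin d → ℝ) :
    eD A x = Metric.infDist (WithLp.toLp 2 x : EuclideanSpace ℝ (Fin d))
      ((WithLp.toLp 2 : (Fin d → ℝ) → EuclideanSpace ℝ (Fin d)) '' A) := by
  rw [Metric.infDist_eq_iInf, ← sInf_image', Set.image_image]
  unfold eD
  congr 1
  apply Set.image_congr
  intro y _
  rw [EuclideanSpace.dist_eq]
  simp [Real.dist_eq, sq_abs]

lemma eD_measurable {d : ℕ} (A : Set (Fin d → ℝ)) : Measurable (eD A) := by
  have h : eD A = fun x => Metric.infDist (WithLp.toLp 2 x : EuclideanSpace ℝ (Fin d))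
      ((WithLp.toLp 2 : (Fin d → ℝ) → EuclideanSpace ℝ (Fin d)) '' A) := by
    funext x; exact eD_eq A x
  rw [h]
  exact ((Metric.continuous_infDist_pt _).comp (PiLp.continuous_toLp 2 _)).measurable

lemma eD_le_of_closure {d : ℕ} (A : Set (Fin d → ℝ)) (x z : Fin d → ℝ) (hz : x + z ∈ closure A) :
    eD A x ≤ eN z := by
  rw [eD_eq, ← Metric.infDist_closure]
  have hmem : (WithLp.toLp 2 (x + z) : EuclideanSpace ℝ (Fin d)) ∈
      closure ((WithLp.toLp 2 : (Fin d → ℝ) → EuclideanSpace ℝ (Fin d)) '' A) :=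
    image_closure_subset_closure_image (PiLp.continuous_toLp 2 _) ⟨_, hz, rfl⟩
  refine (Metric.infDist_le_dist_of_mem hmem).trans (le_of_eq ?_)
  rw [EuclideanSpace.dist_eq]
  simp [sq_abs, eN]

lemma eN_moment {d : ℕ} (q : ℝ) (hq : 1 ≤ q) :
    Integrable (fun w : Fin d → ℝ => eN w ^ q) (Measure.pi fun _ : Fin d => gaussianReal 0 1) := by
  have hmem : MemLp (fun w : Fin d → ℝ => ∑ i, |w i|) (ENNReal.ofReal q)
      (Measure.pi fun _ : Fin d => gaussianReal 0 1) := by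
    refine memLp_finsetSum _ fun i _ => ?_
    have h := (memLp_id_gaussianReal' (μ := 0) (v := 1) (ENNReal.ofReal q) (by simp)).comp_measurePreserving
      (measurePreserving_eval (fun _ : Fin d => gaussianReal 0 1) i)
    exact h.norm
  have h2 : MemLp (eN : (Fin d → ℝ) → ℝ) (ENNReal.ofReal q)
      (Measure.pi fun _ : Fin d => gaussianReal 0 1) := by
    refine hmem.mono' eN_measurable.aestronglyMeasurable (Filter.Eventually.of_forall fun w => ?_)
    rw [Real.norm_of_nonneg (eN_nonneg w)]
    unfold eN
    refine Real.sqrt_le_iff.2 ⟨by positivity, ?_⟩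
    have := Finset.sum_sq_le_sq_sum_of_nonneg (s := Finset.univ) (f := fun i => |w i|) (fun i _ => abs_nonneg _)
    simpa [sq_abs] using this
  have h3 := h2.integrable_norm_rpow (by simp; linarith) (by simp)
  refine h3.congr (Filter.Eventually.of_forall fun w => ?_)
  simp only [Real.norm_of_nonneg (eN_nonneg w)]
  rw [ENNReal.toReal_ofReal (by linarith)]

/-- gradient norm extended by zero -/
noncomputable def gN {d : ℕ} (f : (Fin d → ℝ) → ℝ) (S : Set (Fin d → ℝ)) (x : Fin d → ℝ) : ℝ :=
  Real.sqrt (∑ i, (if x ∈ interior S then gradVec f x i else 0) ^ 2)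

lemma gN_measurable {d : ℕ} (f : (Fin d → ℝ) → ℝ) (S : Set (Fin d → ℝ)) :
    Measurable (gN f S) := by
  unfold gN
  refine Measurable.sqrt (Finset.measurable_sum _ fun i _ => Measurable.pow_const ?_ _)
  exact Measurable.ite isOpen_interior.measurableSet
    (measurable_fderiv_apply_const ℝ f _) measurable_const

lemma abs_fderiv_le {d : ℕ} (f : (Fin d → ℝ) → ℝ) (S : Set (Fin d → ℝ)) (y v : Fin d → ℝ)
    (hy : y ∈ interior S) : |fderiv ℝ f y v| ≤ eN v * gN f S y := by
  have h1 : fderiv ℝ f y v = ∑ i, v i * gradVec f y i := by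
    conv_lhs => rw [pi_eq_sum_univ' v]
    simp [gradVec, map_sum]
  have key : ∀ u : Fin d → ℝ, ∑ i, u i * gradVec f y i ≤ eN u * gN f S y := by
    intro u
    unfold eN gN
    simp only [hy, if_true]
    exact Real.sum_mul_le_sqrt_mul_sqrt _ _ _
  rw [h1]
  refine abs_le'.2 ⟨key v, ?_⟩
  have := key (-v)
  simpa [eN] using this

lemma line_bound {d : ℕ} (f : (Fin d → ℝ) → ℝ) (S : Set (Fin d → ℝ))
    (hdiff : ∀ x ∈ interior S, DifferentiableAt ℝ f x) (x v : Fin d → ℝ)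
    (hseg : ∀ t ∈ Set.Icc (0:ℝ) 1, x + t • v ∈ interior S) :
    ENNReal.ofReal (f x - f (x + v)) ≤
      ENNReal.ofReal (eN v) * ∫⁻ t in Set.Icc (0:ℝ) 1, ENNReal.ofReal (gN f S (x + t • v)) := by
  have hder : ∀ t ∈ Set.Icc (0:ℝ) 1, HasDerivAt (fun t : ℝ => f (x + t • v))
      (fderiv ℝ f (x + t • v) v) t := by
    intro t ht
    have h1 : HasDerivAt (fun t : ℝ => x + t • v) v t := by
      simpa using ((hasDerivAt_id t).smul_const v).const_add x
    exact (hdiff _ (hseg t ht)).hasFDerivAt.comp_hasDerivAt t h1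
  have hmeas : Measurable fun t : ℝ => fderiv ℝ f (x + t • v) v :=
    (measurable_fderiv_apply_const ℝ f v).comp (by fun_prop)
  have hA : ENNReal.ofReal (f x - f (x + v)) ≤
      ∫⁻ t in Set.Icc (0:ℝ) 1, ‖fderiv ℝ f (x + t • v) v‖ₑ := by
    by_cases htop : ∫⁻ t in Set.Icc (0:ℝ) 1, ‖fderiv ℝ f (x + t • v) v‖ₑ = ⊤
    · rw [htop]; exact le_top
    have hint : IntegrableOn (fun t : ℝ => fderiv ℝ f (x + t • v) v) (Set.Icc 0 1) :=
      ⟨hmeas.aestronglyMeasurable, lt_top_iff_ne_top.2 htop⟩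
    have hint' : IntervalIntegrable (fun t : ℝ => fderiv ℝ f (x + t • v) v) volume 0 1 :=
      (intervalIntegrable_iff_integrableOn_Icc_of_le zero_le_one).2 hint
    have hftc := intervalIntegral.integral_eq_sub_of_hasDerivAt
      (by rwa [Set.uIcc_of_le zero_le_one]) hint'
    simp only [one_smul, zero_smul, add_zero] at hftc
    rw [intervalIntegral.integral_of_le zero_le_one, ← integral_Icc_eq_integral_Ioc] at hftc
    calc ENNReal.ofReal (f x - f (x + v)) ≤ ‖f x - f (x + v)‖ₑ := Real.ofReal_le_enorm _
      _ = ‖f (x + v) - f x‖ₑ := by rw [← enorm_neg, neg_sub]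
      _ ≤ _ := by rw [← hftc]; exact enorm_integral_le_lintegral_enorm _
  refine hA.trans ?_
  rw [← lintegral_const_mul' _ _ ENNReal.ofReal_ne_top]
  refine setLIntegral_mono' measurableSet_Icc fun t ht => ?_
  rw [← ENNReal.ofReal_mul (eN_nonneg v), Real.enorm_eq_ofReal_abs]
  exact ENNReal.ofReal_le_ofReal (abs_fderiv_le f S _ v (hseg t ht))

lemma translate_avg {d : ℕ} (G : (Fin d → ℝ) → ENNReal) (hG : Measurable G) (v : Fin d → ℝ) :
    ∫⁻ x, ∫⁻ t in Set.Icc (0:ℝ) 1, G (x + t • v) = ∫⁻ x, G x := by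
  rw [lintegral_lintegral_swap]
  · simp [lintegral_add_right_eq_self]
  · apply Measurable.aemeasurable
    apply hG.comp
    fun_prop

/-- **A sufficient condition for Assumption (P).**  Let `𝒫` be a probability measure on `ℝ^d`
with support `S` (the smallest closed set of full measure) and Lebesgue density `f`.  Suppose
(1) `f` is differentiable on `int S` and, setting `∇f ≡ 0` outside `int S`, `‖∇f‖₂ ∈ L¹`;
and (2) `𝒫(S_r) ≤ C(f) r` for all `r ≥ 0`, where
`S_r = {x : inf_{y ∈ Sᶜ} ‖x − y‖₂ ≤ r}` (empty if `S = ℝ^d`).  Then for `X ~ 𝒫` and `W` an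
independent standard `d`-dimensional Gaussian, for all `p, s ≥ 0` one has
`E[‖W‖₂^p (1 − f(X+sW)/f(X))₊] ≤ C'(f,p) s` with `C'(f,p) < ∞` depending only on `f`, `p`. -/
theorem assumptionP_of_smooth_density
    (d : ℕ) (f : (Fin d → ℝ) → ℝ) (P : Measure (Fin d → ℝ)) [IsProbabilityMeasure P]
    (hf : ∀ x, 0 ≤ f x)
    (hdens : P = volume.withDensity fun x => ENNReal.ofReal (f x))
    (S : Set (Fin d → ℝ))
    (hSclosed : IsClosed S) (hSfull : P S = 1)
    (hSmin : ∀ F : Set (Fin d → ℝ), IsClosed F → P F = 1 → S ⊆ F)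
    (hdiff : ∀ x ∈ interior S, DifferentiableAt ℝ f x)
    (hgradL1 : Integrable
      (fun x => Real.sqrt (∑ i, (if x ∈ interior S then gradVec f x i else 0) ^ 2))
      (volume : Measure (Fin d → ℝ)))
    (C : ℝ)
    (hC : ∀ r : ℝ, 0 ≤ r →
      P {x | Sᶜ.Nonempty ∧
          sInf ((fun y => Real.sqrt (∑ i, (x i - y i) ^ 2)) '' Sᶜ) ≤ r} ≤
        ENNReal.ofReal (C * r)) :
    ∀ p : ℝ, 0 ≤ p → ∃ C' : ℝ, 0 ≤ C' ∧ ∀ s : ℝ, 0 ≤ s →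
      (∫ x, ∫ w, Real.sqrt (∑ i, w i ^ 2) ^ p * max (1 - f (x + s • w) / f x) 0
          ∂(Measure.pi fun _ : Fin d => gaussianReal 0 1) ∂P) ≤ C' * s := by
  intro p hp
  set U := interior S with hU
  have hUo : IsOpen U := isOpen_interior
  set γ : Measure (Fin d → ℝ) := Measure.pi fun _ : Fin d => gaussianReal 0 1 with hγ
  -- `P` is carried by `U`
  have hPU : P Uᶜ = 0 := by
    have h0 := hC 0 le_rfl
    simp only [mul_zero, ENNReal.ofReal_zero] at h0
    refine measure_mono_null ?_ (le_antisymm h0 zero_le)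
    intro x hx
    have hx' : x ∈ closure Sᶜ := by rwa [closure_compl]
    refine ⟨closure_nonempty_iff.1 ⟨x, hx'⟩, ?_⟩
    have := eD_le_of_closure Sᶜ x 0 (by simpa using hx')
    simpa [eN, eD] using this
  set f0 : (Fin d → ℝ) → ENNReal := U.indicator fun x => ENNReal.ofReal (f x) with hf0
  have hPrestr : P.restrict U = P := Measure.restrict_eq_self_of_ae_mem (by
    rw [Filter.Eventually, mem_ae_iff]; exact hPU)
  have hP : P = volume.withDensity f0 := by
    rw [hf0, withDensity_indicator hUo.measurableSet, ← restrict_withDensity hUo.measurableSet,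
      ← hdens, hPrestr]
  have hf0m : Measurable f0 := by
    have hfc : ContinuousOn (fun x => ENNReal.ofReal (f x)) U := fun x hx =>
      (ENNReal.continuous_ofReal.continuousAt.comp (hdiff x hx).continuousAt).continuousWithinAt
    have := hfc.measurable_piecewise (g := (0 : (Fin d → ℝ) → ENNReal)) continuousOn_const hUo.measurableSet
    rwa [Set.piecewise_eq_indicator] at this
  have hae : ∀ᵐ x ∂P, x ∈ U ∧ 0 < f x := by
    rw [hP, ae_withDensity_iff hf0m]
    refine Filter.Eventually.of_forall fun x hx => ?_
    by_cases hxU : x ∈ U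
    · refine ⟨hxU, ?_⟩
      simpa [hf0, hxU] using hx
    · simp [hf0, hxU] at hx
  set G : (Fin d → ℝ) → ENNReal := fun x => ENNReal.ofReal (gN f S x) with hG
  have hGm : Measurable G := (gN_measurable f S).ennreal_ofReal
  set I : ENNReal := ∫⁻ x, G x with hI
  have hIfin : I ≠ ⊤ := by
    have h : Integrable (gN f S) volume := hgradL1
    exact h.lintegral_lt_top.ne
  set M : ENNReal := ∫⁻ w, ENNReal.ofReal (eN w ^ (p + 1)) ∂γ with hM
  have hMfin : M ≠ ⊤ := (eN_moment (d := d) (p + 1) (by linarith)).lintegral_lt_top.ne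
  set K : ENNReal := M * (ENNReal.ofReal C + I) with hK
  have hKfin : K ≠ ⊤ := ENNReal.mul_ne_top hMfin (ENNReal.add_ne_top.2 ⟨ENNReal.ofReal_ne_top, hIfin⟩)
  refine ⟨K.toReal, ENNReal.toReal_nonneg, fun s hs => ?_⟩
  -- the bad set
  let B : (Fin d → ℝ) → Set (Fin d → ℝ) := fun w => {x | Sᶜ.Nonempty ∧ eD Sᶜ x ≤ s * eN w}
  let J : (Fin d → ℝ) → (Fin d → ℝ) → ENNReal := fun x w =>
    ∫⁻ t in Set.Icc (0:ℝ) 1, G (x + t • (s • w))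
  let H : (Fin d → ℝ) → (Fin d → ℝ) → ENNReal := fun x w =>
    ENNReal.ofReal (eN w ^ p) *
      ((B w).indicator (fun _ => 1) x + (f0 x)⁻¹ * (ENNReal.ofReal (s * eN w) * J x w))
  have hJm : Measurable (Function.uncurry J) := by
    refine Measurable.lintegral_prod_right' (f := fun q : ((Fin d → ℝ) × (Fin d → ℝ)) × ℝ =>
      G (q.1.1 + q.2 • (s • q.1.2))) ?_
    exact hGm.comp (by fun_prop)
  have hBm : Measurable (fun q : (Fin d → ℝ) × (Fin d → ℝ) =>
      (B q.2).indicator (fun _ => (1 : ENNReal)) q.1) := by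
    have hset : MeasurableSet {q : (Fin d → ℝ) × (Fin d → ℝ) |
        Sᶜ.Nonempty ∧ eD Sᶜ q.1 ≤ s * eN q.2} :=
      MeasurableSet.inter (MeasurableSet.const Sᶜ.Nonempty) (measurableSet_le
        ((eD_measurable Sᶜ).comp measurable_fst)
        ((eN_measurable.comp measurable_snd).const_mul s))
    exact measurable_const.indicator hset (f := fun _ => (1 : ENNReal))
  have hNm : Measurable (fun q : (Fin d → ℝ) × (Fin d → ℝ) => eN q.2) :=
    eN_measurable.comp measurable_snd
  have hHm : Measurable (Function.uncurry H) := by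
    refine Measurable.mul (Measurable.ennreal_ofReal (hNm.pow_const p)) (hBm.add ?_)
    exact Measurable.mul (hf0m.comp measurable_fst).inv
      ((hNm.const_mul s).ennreal_ofReal.mul hJm)
  -- pointwise bound
  have hpt : ∀ x, x ∈ U → 0 < f x → ∀ w,
      ‖Real.sqrt (∑ i, w i ^ 2) ^ p * max (1 - f (x + s • w) / f x) 0‖ₑ ≤ H x w := by
    intro x hxU hfx w
    have hN : (0:ℝ) ≤ eN w ^ p := Real.rpow_nonneg (eN_nonneg w) p
    change ‖eN w ^ p * _‖ₑ ≤ _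
    rw [Real.enorm_of_nonneg (mul_nonneg hN (le_max_right _ _)), ENNReal.ofReal_mul hN]
    refine mul_le_mul_right ?_ _
    by_cases hseg : ∀ t ∈ Set.Icc (0:ℝ) 1, x + t • (s • w) ∈ U
    · refine le_trans ?_ le_add_self
      have hl := line_bound f S hdiff x (s • w) hseg
      rw [eN_smul s hs] at hl
      have hf0x : f0 x = ENNReal.ofReal (f x) := by simp [hf0, hxU]
      have he : ENNReal.ofReal (max (1 - f (x + s • w) / f x) 0) =
          (f0 x)⁻¹ * ENNReal.ofReal (f x - f (x + s • w)) := by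
        rw [hf0x, ← ENNReal.ofReal_inv_of_pos hfx, ← ENNReal.ofReal_mul (by positivity)]
        rw [show (f x)⁻¹ * (f x - f (x + s • w)) = 1 - f (x + s • w) / f x by field_simp]
        simp [ENNReal.ofReal_max]
      rw [he]
      exact mul_le_mul_right hl _
    · refine le_trans ?_ le_self_add
      push Not at hseg
      obtain ⟨t, ht, hxt⟩ := hseg
      have hcl : x + t • (s • w) ∈ closure Sᶜ := by rw [closure_compl]; exact hxt
      have hxB : x ∈ B w := by
        refine ⟨closure_nonempty_iff.1 ⟨_, hcl⟩, ?_⟩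
        refine (eD_le_of_closure Sᶜ x _ hcl).trans ?_
        rw [eN_smul t ht.1, eN_smul s hs]
        exact mul_le_of_le_one_left (mul_nonneg hs (eN_nonneg w)) ht.2
      rw [Set.indicator_of_mem hxB]
      refine ENNReal.ofReal_le_one.2 (max_le ?_ zero_le_one)
      have : 0 ≤ f (x + s • w) / f x := div_nonneg (hf _) hfx.le
      linarith
  -- integral over x for fixed w
  have hx : ∀ w, ∫⁻ x, H x w ∂P ≤
      ENNReal.ofReal (eN w ^ (p + 1)) * (ENNReal.ofReal s * (ENNReal.ofReal C + I)) := by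
    intro w
    have hsN : 0 ≤ s * eN w := mul_nonneg hs (eN_nonneg w)
    have hBw : MeasurableSet (B w) := MeasurableSet.inter (MeasurableSet.const Sᶜ.Nonempty)
      (measurableSet_le (eD_measurable Sᶜ) measurable_const)
    have h1 : ∫⁻ x, (B w).indicator (fun _ => (1 : ENNReal)) x ∂P ≤
        ENNReal.ofReal (s * eN w) * ENNReal.ofReal C := by
      rw [lintegral_indicator hBw, setLIntegral_const, one_mul]
      refine (hC _ hsN).trans ?_
      rw [mul_comm C, ENNReal.ofReal_mul hsN]
    have h2 : ∫⁻ x, (f0 x)⁻¹ * (ENNReal.ofReal (s * eN w) * J x w) ∂P ≤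
        ENNReal.ofReal (s * eN w) * I := by
      rw [hP]
      refine (lintegral_withDensity_le_lintegral_mul _ hf0m _).trans ?_
      calc _ ≤ ∫⁻ x, ENNReal.ofReal (s * eN w) * J x w := by
            refine lintegral_mono fun x => ?_
            simp only [Pi.mul_apply]
            rw [← mul_assoc]
            exact mul_le_of_le_one_left zero_le (ENNReal.mul_inv_le_one _)
        _ = ENNReal.ofReal (s * eN w) * I := by
            rw [lintegral_const_mul' _ _ ENNReal.ofReal_ne_top, translate_avg G hGm]
    have hp1 : eN w ^ (p + 1) = eN w ^ p * eN w := by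
      rw [Real.rpow_add_one' (eN_nonneg w) (by linarith)]
    calc ∫⁻ x, H x w ∂P = ENNReal.ofReal (eN w ^ p) *
          (∫⁻ x, (B w).indicator (fun _ => (1 : ENNReal)) x ∂P +
            ∫⁻ x, (f0 x)⁻¹ * (ENNReal.ofReal (s * eN w) * J x w) ∂P) := by
          rw [← lintegral_add_left (measurable_const.indicator hBw),
            lintegral_const_mul' _ _ ENNReal.ofReal_ne_top]
      _ ≤ ENNReal.ofReal (eN w ^ p) * (ENNReal.ofReal (s * eN w) * ENNReal.ofReal C +
            ENNReal.ofReal (s * eN w) * I) := mul_le_mul_right (add_le_add h1 h2) _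
      _ = _ := by
          rw [hp1, ENNReal.ofReal_mul (Real.rpow_nonneg (eN_nonneg w) p), ENNReal.ofReal_mul hs]
          ring
  have htot : ∫⁻ x, ∫⁻ w, H x w ∂γ ∂P ≤ K * ENNReal.ofReal s := by
    rw [lintegral_lintegral_swap hHm.aemeasurable]
    refine (lintegral_mono hx).trans (le_of_eq ?_)
    rw [lintegral_mul_const' _ _ (ENNReal.mul_ne_top ENNReal.ofReal_ne_top
      (ENNReal.add_ne_top.2 ⟨ENNReal.ofReal_ne_top, hIfin⟩)), hK, ← hM]
    ring
  have hfinal : ENNReal.ofReal (∫ x, ∫ w, Real.sqrt (∑ i, w i ^ 2) ^ p *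
      max (1 - f (x + s • w) / f x) 0 ∂γ ∂P) ≤ K * ENNReal.ofReal s := by
    refine (Real.ofReal_le_enorm _).trans ((enorm_integral_le_lintegral_enorm _).trans
      (le_trans (lintegral_mono_ae ?_) htot))
    filter_upwards [hae] with x hx'
    exact (enorm_integral_le_lintegral_enorm _).trans
      (lintegral_mono fun w => hpt x hx'.1 hx'.2 w)
  have := ENNReal.toReal_mono (ENNReal.mul_ne_top hKfin ENNReal.ofReal_ne_top) hfinal
  rw [ENNReal.toReal_mul, ENNReal.toReal_ofReal hs] at this
  refine le_trans ?_ this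
  rw [ENNReal.toReal_ofReal']
  exact le_max_left _ _
end
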